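/- Let X_1,…,X_n be i.i.d. N_p(0, I_p) Gaussian vectors, let 1 ≤ S < p/2, and let W ⊆ {1,…,S} have w ≥ 1 elements. Then for every K ∈ (0,1) and every u > 0, P[ Tr(A_W(Σ_n − I_p)) ≥ t ] ≤ exp(−u/4), where t = max{ √(u/(2(1−K))) · √(w/(n(p−S))), (u/K) · w/(n(p−S)) }. -/

import Mathlib

open MeasureTheory Matrix Real
open scoped ENNReal BigOperators NNReal

noncomputable def gaussianPDF {p : ℕ} (C : Matrix (Fin p) (Fin p) ℝ) (x : Fin p → ℝ) : ℝ≥0∞ :=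
  ENNReal.ofReal ((2 * Real.pi) ^ (-(p : ℝ) / 2) * C.det ^ (-(1:ℝ)/2) *
    Real.exp (-(1/2) * (x ⬝ᵥ C⁻¹.mulVec x)))

/-- The centered multivariate Gaussian measure `N_p(0, C)` on `Fin p → ℝ`. -/
noncomputable def gaussianMeasure {p : ℕ} (C : Matrix (Fin p) (Fin p) ℝ) :
    Measure (Fin p → ℝ) :=
  MeasureTheory.volume.withDensity (gaussianPDF C)

/-- The law of `n` i.i.d. `N_p(0, C)` vectors. -/
noncomputable def iidGaussian (n p : ℕ) (C : Matrix (Fin p) (Fin p) ℝ) :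
    Measure (Fin n → Fin p → ℝ) :=
  MeasureTheory.volume.withDensity fun X => ∏ k, gaussianPDF C (X k)

/-- The sample covariance matrix `Σ_n = (1/n) ∑ X_k X_kᵀ`. -/
noncomputable def sampleCov {n p : ℕ} (X : Fin n → Fin p → ℝ) :
    Matrix (Fin p) (Fin p) ℝ :=
  (n : ℝ)⁻¹ • ∑ k, Matrix.of fun i j => X k i * X k j

/-- Frobenius norm of a matrix. -/
noncomputable def frobNorm {p : ℕ} (M : Matrix (Fin p) (Fin p) ℝ) : ℝ :=
  Real.sqrt (∑ i, ∑ j, (M i j)^2)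

/-- Spectral (ℓ²-operator) norm of a matrix. -/
noncomputable def specNorm {p : ℕ} (M : Matrix (Fin p) (Fin p) ℝ) : ℝ :=
  ‖Matrix.toEuclideanCLM (𝕜 := ℝ) M‖

/-- The matrix `A_j` with entries `1/(2(p-j))` on the `j`-th upper and lower diagonals. -/
noncomputable def lagMatrix (p j : ℕ) : Matrix (Fin p) (Fin p) ℝ :=
  Matrix.of fun k l => if ((k:ℤ) - (l:ℤ)).natAbs = j then 1/(2*((p:ℝ) - j)) else 0

/-- Two-sided class `F(s,S,σ)` of sparse Toeplitz covariance matrices with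
diagonal value `σ0`. -/
def memF (p s S : ℕ) (σ σ0 : ℝ) (C : Matrix (Fin p) (Fin p) ℝ) : Prop :=
  C.PosDef ∧ ∃ v : ℕ → ℝ, v 0 = σ0 ∧
    (∀ i j : Fin p, C i j = v ((i:ℤ) - (j:ℤ)).natAbs) ∧
    ∃ T : Finset ℕ, T ⊆ Finset.Icc 1 S ∧ T.card = s ∧
      (∀ j ∈ T, σ ≤ |v j|) ∧ (∀ j, 1 ≤ j → j ≤ p - 1 → j ∉ T → v j = 0)

/-- One-sided class `F₊(s,S,σ)` of sparse Toeplitz covariance matrices with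
diagonal value `σ0`. -/
def memFplus (p s S : ℕ) (σ σ0 : ℝ) (C : Matrix (Fin p) (Fin p) ℝ) : Prop :=
  C.PosDef ∧ ∃ v : ℕ → ℝ, v 0 = σ0 ∧
    (∀ i j : Fin p, C i j = v ((i:ℤ) - (j:ℤ)).natAbs) ∧
    ∃ T : Finset ℕ, T ⊆ Finset.Icc 1 S ∧ T.card = s ∧
      (∀ j ∈ T, σ ≤ v j) ∧ (∀ j, 1 ≤ j → j ≤ p - 1 → j ∉ T → v j = 0)

/-! Under `N_p(0, I_p)` the law of a vector is invariant under rotations, so a quadratic form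
`xᵀ A x` with symmetric `A` has the law of `∑ λ_i x_i²`, where the `λ_i` are the eigenvalues of `A`.
Centred at its mean `tr A`, it has moment generating function
`∏ e^{-cλ_i} (1 - 2cλ_i)^{-1/2} ≤ exp (c² ∑ λ_i² / (1 - 2cr))` as soon as all `λ_i ≤ r` and
`2cr < 1`. Since `tr (A (Σ_n - I_p))` is the average of `n` independent such forms, Chernoff's bound
with the near-optimal parameter `c = t / (2 (v + rt))` yields the Bernstein inequality
`exp (-n t² / (4 (v + rt)))` whenever `∑ λ_i² ≤ v`.

For `A = A_W` the row sums bound every `|λ_i|` by `r = w / (p - S)`, and as distinct lags have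
disjoint supports the Frobenius norm gives `∑ λ_i² ≤ v = w / (2 (p - S))`. The two terms of the
threshold are such that the `v`-part and the `rt`-part of `v + rt` account for the fractions
`1 - K` and `K` of `t²`. -/

theorem neg_log_one_sub_le_of_nonneg {x : ℝ} (h0 : 0 ≤ x) (h1 : x < 1) :
    -Real.log (1 - x) ≤ x + x ^ 2 / (2 * (1 - x)) := by
  have hpos : 0 < 1 - x := by linarith
  have hlog : 0 ≤ Real.log (1 - x)⁻¹ := Real.log_nonneg ((one_le_inv₀ hpos).2 (by linarith))
  calc -Real.log (1 - x) = Real.log (1 - x)⁻¹ := (Real.log_inv _).symm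
    _ ≤ Real.sinh (Real.log (1 - x)⁻¹) := Real.self_le_sinh_iff.2 hlog
    _ = x + x ^ 2 / (2 * (1 - x)) := by
      rw [Real.sinh_log (inv_pos.2 hpos)]
      field

theorem neg_log_one_sub_le_of_nonpos {x : ℝ} (hx : x ≤ 0) :
    -Real.log (1 - x) ≤ x + x ^ 2 / 2 := by
  have hlog : 2 * -x / (-x + 2) ≤ Real.log (1 - x) := by
    simpa [sub_eq_add_neg] using Real.le_log_one_add_of_nonneg (neg_nonneg.2 hx)
  have hle : -x - x ^ 2 / 2 ≤ 2 * -x / (-x + 2) := by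
    rw [le_div_iff₀ (by linarith)]
    nlinarith [mul_nonneg (sq_nonneg x) (neg_nonneg.2 hx)]
  linarith

theorem neg_log_one_sub_le {x b : ℝ} (hx : x ≤ b) (hb0 : 0 ≤ b) (hb1 : b < 1) :
    -Real.log (1 - x) ≤ x + x ^ 2 / (2 * (1 - b)) := by
  have hb : 0 < 1 - b := by linarith
  rcases le_total 0 x with h | h
  · refine (neg_log_one_sub_le_of_nonneg h (by linarith)).trans ?_
    gcongr
  · refine (neg_log_one_sub_le_of_nonpos h).trans ?_
    gcongr
    linarith

theorem exp_neg_mul_inv_sqrt_one_sub_le {y b : ℝ} (hy : y ≤ b) (hb0 : 0 ≤ b) (hb1 : 2 * b < 1) :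
    Real.exp (-y) * (√(1 - 2 * y))⁻¹ ≤ Real.exp (y ^ 2 / (1 - 2 * b)) := by
  have hpos : 0 < 1 - 2 * y := by linarith
  have hb : 0 < 1 - 2 * b := by linarith
  have hlog : -Real.log (1 - 2 * y) ≤ 2 * y + (2 * y) ^ 2 / (2 * (1 - 2 * b)) :=
    neg_log_one_sub_le (by linarith) (by linarith) hb1
  have hsq : (2 * y) ^ 2 / (2 * (1 - 2 * b)) = 2 * (y ^ 2 / (1 - 2 * b)) := by field
  rw [← Real.log_le_iff_le_exp (by positivity), Real.log_mul (by positivity) (by positivity),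
    Real.log_exp, Real.log_inv, Real.log_sqrt hpos.le]
  linarith

section Eigenvalues

variable {ι : Type*} [Fintype ι] [DecidableEq ι]

theorem sum_sq_eigenvalues_eq {𝕜 : Type*} [RCLike 𝕜] {A : Matrix ι ι 𝕜} (hA : A.IsHermitian) :
    ∑ i, hA.eigenvalues i ^ 2 = ∑ i, ∑ j, ‖A i j‖ ^ 2 := by
  have htrace : (A * Aᴴ).trace = ∑ i, (hA.eigenvalues i : 𝕜) ^ 2 := by
    rw [hA.eq]
    conv_lhs => rw [hA.spectral_theorem, ← map_mul, Unitary.conjStarAlgAut_apply,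
      Matrix.trace_mul_cycle, Unitary.coe_star_mul_self, one_mul, diagonal_mul_diagonal,
      trace_diagonal]
    simp [sq]
  have hnorm : (A * Aᴴ).trace = ∑ i, ∑ j, (‖A i j‖ : 𝕜) ^ 2 := by
    simp [trace, mul_apply, RCLike.mul_conj]
  exact_mod_cast htrace.symm.trans hnorm

theorem norm_eigenvalue_le_of_sum_norm_le {K : Type*} [NormedField K] {A : Matrix ι ι K} {μ : K}
    (hμ : Module.End.HasEigenvalue (toLin' A) μ) {r : ℝ} (hr : ∀ i, ∑ j, ‖A i j‖ ≤ r) :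
    ‖μ‖ ≤ r := by
  obtain ⟨k, hk⟩ := eigenvalue_mem_ball hμ
  rw [mem_closedBall_iff_norm] at hk
  calc ‖μ‖ ≤ ‖A k k‖ + ‖μ - A k k‖ := norm_le_insert' _ _
    _ ≤ ‖A k k‖ + ∑ j ∈ Finset.univ.erase k, ‖A k j‖ := by gcongr
    _ = ∑ j, ‖A k j‖ := Finset.add_sum_erase _ (fun j ↦ ‖A k j‖) (Finset.mem_univ k)
    _ ≤ r := hr k

theorem abs_eigenvalues_le_of_sum_norm_le {𝕜 : Type*} [RCLike 𝕜] {A : Matrix ι ι 𝕜}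
    (hA : A.IsHermitian) {r : ℝ} (hr : ∀ i, ∑ j, ‖A i j‖ ≤ r) (i : ι) :
    |hA.eigenvalues i| ≤ r := by
  have hev : Module.End.HasEigenvalue (toLin' A) (hA.eigenvalues i : 𝕜) := by
    rw [Module.End.hasEigenvalue_iff_mem_spectrum, Matrix.spectrum_toLin']
    exact spectrum.algebraMap_mem 𝕜 (hA.eigenvalues_mem_spectrum_real i)
  simpa using norm_eigenvalue_le_of_sum_norm_le hev hr

end Eigenvalues

section PiMeasure

variable {ι : Type*} [Fintype ι] {α : ι → Type*} [∀ i, MeasurableSpace (α i)]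
  {μ : ∀ i, Measure (α i)} [∀ i, SigmaFinite (μ i)] {f : ∀ i, α i → ℝ≥0∞}

theorem lmarginal_prod_eq_prod_lintegral [DecidableEq ι] (hf : ∀ i, Measurable (f i))
    (s : Finset ι) (x : ∀ i, α i) :
    lmarginal μ s (fun x ↦ ∏ i, f i (x i)) x =
      (∏ i ∈ s, ∫⁻ y, f i y ∂μ i) * ∏ i ∈ sᶜ, f i (x i) := by
  induction s using Finset.induction generalizing x with
  | empty => simp
  | insert i s hi ih =>
    have hprod : ∀ y, ∏ j ∈ sᶜ, f j (Function.update x i y j) =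
        f i y * ∏ j ∈ (insert i s)ᶜ, f j (x j) := fun y ↦ by
      rw [Finset.compl_insert, ← Finset.mul_prod_erase sᶜ _ (Finset.mem_compl.2 hi),
        Function.update_self]
      congr 1
      exact Finset.prod_congr rfl fun j hj ↦ by
        rw [Function.update_of_ne (Finset.ne_of_mem_erase hj)]
    rw [lmarginal_insert _ (by fun_prop) hi]
    simp_rw [ih, hprod]
    rw [lintegral_const_mul _ (by fun_prop), lintegral_mul_const _ (hf i),
      Finset.prod_insert hi]
    ring

theorem lintegral_pi_prod_eq_prod_lintegral (hf : ∀ i, Measurable (f i)) :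
    ∫⁻ x, ∏ i, f i (x i) ∂Measure.pi μ = ∏ i, ∫⁻ y, f i y ∂μ i := by
  classical
  rcases isEmpty_or_nonempty (∀ i, α i) with h | ⟨⟨x⟩⟩
  · obtain ⟨i, hi⟩ := isEmpty_pi.1 h
    rw [lintegral_of_isEmpty, eq_comm, Finset.prod_eq_zero (Finset.mem_univ i)]
    exact lintegral_of_isEmpty _ _
  · rw [lintegral_eq_lmarginal_univ x, lmarginal_prod_eq_prod_lintegral hf]
    simp

theorem pi_withDensity (hf : ∀ i, Measurable (f i))
    [∀ i, SigmaFinite ((μ i).withDensity (f i))] :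
    Measure.pi (fun i ↦ (μ i).withDensity (f i)) =
      (Measure.pi μ).withDensity fun x ↦ ∏ i, f i (x i) := by
  refine Measure.pi_eq fun s hs ↦ ?_
  rw [withDensity_apply _ (.univ_pi hs), Measure.restrict_pi_pi,
    lintegral_pi_prod_eq_prod_lintegral hf]
  exact Finset.prod_congr rfl fun i _ ↦ (withDensity_apply _ (hs i)).symm

end PiMeasure

open ProbabilityTheory (mgf gaussianReal gaussianPDFReal)

theorem mgf_sum_pi {ι α : Type*} [Fintype ι] [MeasurableSpace α] {μ : Measure α} [SigmaFinite μ]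
    (f : α → ℝ) (c : ℝ) :
    mgf (fun x ↦ ∑ k, f (x k)) (Measure.pi fun _ : ι ↦ μ) c = mgf f μ c ^ Fintype.card ι := by
  simp only [mgf, Finset.mul_sum, Real.exp_sum]
  exact integral_fintype_prod_eq_pow fun x ↦ Real.exp (c * f x)

theorem measureReal_pi_le_sum_le {ι α : Type*} [Fintype ι] [MeasurableSpace α] {μ : Measure α}
    [IsProbabilityMeasure μ] {f : α → ℝ} {c : ℝ} (hc : 0 ≤ c)
    (hf : Integrable (fun x ↦ Real.exp (c * f x)) μ) (ε : ℝ) :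
    (Measure.pi fun _ : ι ↦ μ).real {x | ε ≤ ∑ k, f (x k)} ≤
      Real.exp (-c * ε) * mgf f μ c ^ Fintype.card ι := by
  rw [← mgf_sum_pi]
  refine ProbabilityTheory.measure_ge_le_exp_mul_mgf ε hc ?_
  simp only [Finset.mul_sum, Real.exp_sum]
  exact Integrable.fintype_prod fun _ ↦ hf

-- For `1 ≤ 2 * v * c` the integrand is not integrable and both sides take the junk value `0`.
theorem mgf_sq_gaussianReal (v : ℝ≥0) (c : ℝ) :
    mgf (fun x ↦ x ^ 2) (gaussianReal 0 v) c = (√(1 - 2 * v * c))⁻¹ := by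
  rcases eq_or_ne v 0 with rfl | hv
  · simp [mgf]
  have hv' : (0 : ℝ) < v := by positivity
  calc mgf (fun x ↦ x ^ 2) (gaussianReal 0 v) c
      = ∫ x : ℝ, (√(2 * π * v))⁻¹ * Real.exp (-((1 - 2 * v * c) / (2 * v)) * x ^ 2) := by
        rw [mgf, ProbabilityTheory.integral_gaussianReal_eq_integral_smul hv]
        refine integral_congr_ae (ae_of_all _ fun x ↦ ?_)
        simp only [gaussianPDFReal, smul_eq_mul]
        rw [mul_assoc, ← Real.exp_add]
        congr 2
        field
    _ = (√(1 - 2 * v * c))⁻¹ := by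
        rw [integral_const_mul, integral_gaussian, ← Real.sqrt_inv, ← Real.sqrt_inv,
          ← Real.sqrt_mul (by positivity)]
        congr 1
        field

section GaussianQuadraticForm

variable {ι : Type*} [Fintype ι]

theorem mgf_sum_mul_sq_pi_gaussianReal (a : ι → ℝ) (c : ℝ) :
    mgf (fun x ↦ ∑ i, a i * x i ^ 2) (Measure.pi fun _ ↦ gaussianReal 0 1) c =
      ∏ i, (√(1 - 2 * c * a i))⁻¹ := by
  simp only [mgf, Finset.mul_sum, Real.exp_sum]
  rw [integral_fintype_prod_eq_prod (fun i x ↦ Real.exp (c * (a i * x ^ 2)))]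
  refine Finset.prod_congr rfl fun i _ ↦ ?_
  have h := mgf_sq_gaussianReal 1 (c * a i)
  simpa [mgf, mul_assoc] using h

theorem measurable_dotProduct_mulVec (A : Matrix ι ι ℝ) :
    Measurable fun x : ι → ℝ ↦ x ⬝ᵥ A *ᵥ x := by
  simp only [dotProduct, mulVec]
  fun_prop

variable [DecidableEq ι]

theorem dotProduct_mulVec_sum_eigenvectorBasis {A : Matrix ι ι ℝ} (hA : A.IsHermitian)
    (x : ι → ℝ) :
    (∑ i, x i • hA.eigenvectorBasis i).ofLp ⬝ᵥ A *ᵥ (∑ i, x i • hA.eigenvectorBasis i).ofLp =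
      ∑ i, hA.eigenvalues i * x i ^ 2 := by
  have hmul : A *ᵥ (∑ i, x i • hA.eigenvectorBasis i).ofLp =
      (∑ i, (x i * hA.eigenvalues i) • hA.eigenvectorBasis i).ofLp := by
    simp [mulVec_sum, mulVec_smul, hA.mulVec_eigenvectorBasis, smul_smul]
  have hinner := hA.eigenvectorBasis.orthonormal.inner_sum (fun i ↦ x i * hA.eigenvalues i) x
    Finset.univ
  rw [hmul]
  rw [EuclideanSpace.inner_eq_star_dotProduct] at hinner
  simp only [star_trivial, conj_trivial] at hinner
  rw [hinner]
  exact Finset.sum_congr rfl fun i _ ↦ by ring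

theorem mgf_dotProduct_mulVec_pi_gaussianReal {A : Matrix ι ι ℝ} (hA : A.IsHermitian) (c : ℝ) :
    mgf (fun x ↦ x ⬝ᵥ A *ᵥ x) (Measure.pi fun _ ↦ gaussianReal 0 1) c =
      ∏ i, (√(1 - 2 * c * hA.eigenvalues i))⁻¹ := by
  set γ : Measure (ι → ℝ) := Measure.pi fun _ ↦ gaussianReal 0 1
  set q : EuclideanSpace ℝ ι → ℝ := fun x ↦ x.ofLp ⬝ᵥ A *ᵥ x.ofLp
  have hq : Measurable q := (measurable_dotProduct_mulVec A).comp (by fun_prop)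
  have hexp (ν : Measure (EuclideanSpace ℝ ι)) :
      AEStronglyMeasurable (fun x ↦ Real.exp (c * q x)) ν :=
    (hq.const_mul c).exp.aestronglyMeasurable
  calc mgf (fun x ↦ x ⬝ᵥ A *ᵥ x) γ c
      = mgf q (γ.map (WithLp.toLp 2)) c :=
        (ProbabilityTheory.mgf_map (by fun_prop) (hexp _)).symm
    _ = mgf q (γ.map fun x ↦ ∑ i, x i • hA.eigenvectorBasis i) c := by
        rw [ProbabilityTheory.map_pi_eq_stdGaussian,
          ProbabilityTheory.stdGaussian_eq_map_pi_orthonormalBasis hA.eigenvectorBasis]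
    _ = mgf (fun x ↦ ∑ i, hA.eigenvalues i * x i ^ 2) γ c := by
        rw [ProbabilityTheory.mgf_map (Measurable.aemeasurable (by fun_prop)) (hexp _)]
        exact congrArg (mgf · γ c) (funext (dotProduct_mulVec_sum_eigenvectorBasis hA))
    _ = ∏ i, (√(1 - 2 * c * hA.eigenvalues i))⁻¹ := mgf_sum_mul_sq_pi_gaussianReal _ c

/-- The quadratic form `x ↦ xᵀ A x` minus `tr A`, its mean under the standard Gaussian law. -/
noncomputable def centeredQuadForm {ι : Type*} [Fintype ι] (A : Matrix ι ι ℝ) (x : ι → ℝ) : ℝ :=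
  x ⬝ᵥ A *ᵥ x - A.trace

theorem mgf_centeredQuadForm {A : Matrix ι ι ℝ} (hA : A.IsHermitian) (c : ℝ) :
    mgf (centeredQuadForm A) (Measure.pi fun _ ↦ gaussianReal 0 1) c =
      ∏ i, (Real.exp (-(c * hA.eigenvalues i)) * (√(1 - 2 * (c * hA.eigenvalues i)))⁻¹) := by
  have htr : Real.exp (c * -A.trace) = ∏ i, Real.exp (-(c * hA.eigenvalues i)) := by
    rw [← Real.exp_sum, Finset.sum_neg_distrib, ← Finset.mul_sum, hA.trace_eq_sum_eigenvalues]
    simp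
  have hmgf := ProbabilityTheory.mgf_add_const (X := fun x : ι → ℝ ↦ x ⬝ᵥ A *ᵥ x)
    (μ := Measure.pi fun _ ↦ gaussianReal 0 1) (t := c) (-A.trace)
  simp only [← sub_eq_add_neg] at hmgf
  simp_rw [Finset.prod_mul_distrib, ← htr, ← mul_assoc]
  rw [mul_comm, ← mgf_dotProduct_mulVec_pi_gaussianReal hA]
  exact hmgf

theorem integrable_exp_mul_centeredQuadForm {A : Matrix ι ι ℝ} (hA : A.IsHermitian) {c : ℝ}
    (hc : ∀ i, 2 * (c * hA.eigenvalues i) < 1) :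
    Integrable (fun x ↦ Real.exp (c * centeredQuadForm A x))
      (Measure.pi fun _ ↦ gaussianReal 0 1) := by
  rw [← ProbabilityTheory.mgf_pos_iff, mgf_centeredQuadForm hA]
  exact Finset.prod_pos fun i _ ↦
    mul_pos (Real.exp_pos _) (inv_pos.2 (Real.sqrt_pos.2 (sub_pos.2 (hc i))))

theorem mgf_centeredQuadForm_le {A : Matrix ι ι ℝ} (hA : A.IsHermitian) {r c : ℝ}
    (hr : ∀ i, hA.eigenvalues i ≤ r) (hr0 : 0 ≤ r) (hc0 : 0 ≤ c) (hc : 2 * (c * r) < 1) :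
    mgf (centeredQuadForm A) (Measure.pi fun _ ↦ gaussianReal 0 1) c ≤
      Real.exp (c ^ 2 * (∑ i, hA.eigenvalues i ^ 2) / (1 - 2 * (c * r))) := by
  rw [mgf_centeredQuadForm hA, Finset.mul_sum, Finset.sum_div, Real.exp_sum]
  gcongr with i
  rw [← mul_pow]
  exact exp_neg_mul_inv_sqrt_one_sub_le (by gcongr; exact hr i) (by positivity) hc

end GaussianQuadraticForm

section SampleCovariance

variable {n p : ℕ}

theorem measurable_gaussianPDF (C : Matrix (Fin p) (Fin p) ℝ) : Measurable (gaussianPDF C) := by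
  have hquad := measurable_dotProduct_mulVec C⁻¹
  unfold gaussianPDF
  fun_prop

theorem gaussianPDF_one (x : Fin p → ℝ) :
    gaussianPDF 1 x = ∏ i, ProbabilityTheory.gaussianPDF 0 1 (x i) := by
  have hconst : (2 * π) ^ (-(p : ℝ) / 2) = (√(2 * π))⁻¹ ^ p := by
    rw [Real.sqrt_eq_rpow, ← Real.rpow_neg (by positivity), ← Real.rpow_mul_natCast (by positivity)]
    congr 1
    ring
  have hexp : ∏ i, Real.exp (-(x i) ^ 2 / 2) = Real.exp (-(2⁻¹ * x ⬝ᵥ x)) := by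
    rw [← Real.exp_sum, dotProduct, Finset.mul_sum, ← Finset.sum_neg_distrib]
    congr! 2
    ring
  simp only [ProbabilityTheory.gaussianPDF]
  rw [← ENNReal.ofReal_prod_of_nonneg fun i _ ↦ ProbabilityTheory.gaussianPDFReal_nonneg _ _ _]
  simp [gaussianPDF, gaussianPDFReal, hconst, hexp, Finset.prod_mul_distrib]

theorem gaussianMeasure_one :
    gaussianMeasure (1 : Matrix (Fin p) (Fin p) ℝ) = Measure.pi fun _ ↦ gaussianReal 0 1 := by
  have hpdf : gaussianReal 0 1 = volume.withDensity (ProbabilityTheory.gaussianPDF 0 1) :=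
    ProbabilityTheory.gaussianReal_of_var_ne_zero 0 one_ne_zero
  have hsf : SigmaFinite (volume.withDensity (ProbabilityTheory.gaussianPDF 0 1)) := by
    rw [← hpdf]
    infer_instance
  have hpi : Measure.pi (fun _ : Fin p ↦ volume.withDensity (ProbabilityTheory.gaussianPDF 0 1)) =
      (Measure.pi fun _ ↦ volume).withDensity
        fun x ↦ ∏ i, ProbabilityTheory.gaussianPDF 0 1 (x i) :=
    pi_withDensity fun _ ↦ ProbabilityTheory.measurable_gaussianPDF 0 1
  rw [gaussianMeasure, funext gaussianPDF_one, hpdf, hpi, volume_pi]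

theorem iidGaussian_eq_pi (C : Matrix (Fin p) (Fin p) ℝ) :
    iidGaussian n p C = Measure.pi fun _ ↦ gaussianMeasure C := by
  have : SigmaFinite (volume.withDensity (gaussianPDF C)) :=
    SigmaFinite.withDensity_of_ne_top (ae_of_all _ fun _ ↦ ENNReal.ofReal_ne_top)
  exact (pi_withDensity fun _ ↦ measurable_gaussianPDF C).symm

instance : IsProbabilityMeasure (iidGaussian n p 1) := by
  rw [iidGaussian_eq_pi, gaussianMeasure_one]
  infer_instance

theorem trace_mul_sampleCov_sub_one (hn : n ≠ 0) (A : Matrix (Fin p) (Fin p) ℝ)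
    (X : Fin n → Fin p → ℝ) :
    (A * (sampleCov X - 1)).trace = (n : ℝ)⁻¹ * ∑ k, centeredQuadForm A (X k) := by
  have hquad (x : Fin p → ℝ) : (A * Matrix.of fun i j ↦ x i * x j).trace = x ⬝ᵥ A *ᵥ x := by
    change (A * vecMulVec x x).trace = _
    rw [mul_vecMulVec, trace_vecMulVec, dotProduct_comm]
  simp only [centeredQuadForm, Finset.sum_sub_distrib, Finset.sum_const, Finset.card_univ,
    Fintype.card_fin, nsmul_eq_mul, mul_sub, trace_sub, Matrix.mul_one, sampleCov,
    Matrix.mul_smul, Matrix.mul_sum, trace_smul, trace_sum, hquad, smul_eq_mul]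
  rw [inv_mul_cancel_left₀ (by exact_mod_cast hn)]

theorem iidGaussian_one_real_trace_ge_le_chernoff (hn : n ≠ 0) {A : Matrix (Fin p) (Fin p) ℝ}
    (hA : A.IsHermitian) {r c : ℝ} (hr : ∀ i, hA.eigenvalues i ≤ r) (hr0 : 0 ≤ r) (hc0 : 0 ≤ c)
    (hc : 2 * (c * r) < 1) (t : ℝ) :
    (iidGaussian n p 1).real {X | t ≤ (A * (sampleCov X - 1)).trace} ≤
      Real.exp (n * (c ^ 2 * (∑ i, hA.eigenvalues i ^ 2) / (1 - 2 * (c * r)) - c * t)) := by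
  have hset : {X : Fin n → Fin p → ℝ | t ≤ (A * (sampleCov X - 1)).trace} =
      {X | n * t ≤ ∑ k, centeredQuadForm A (X k)} := by
    ext X
    simp only [Set.mem_ofPred_eq, trace_mul_sampleCov_sub_one hn]
    rw [le_inv_mul_iff₀ (by positivity)]
  have hint := integrable_exp_mul_centeredQuadForm hA fun i ↦
    (show 2 * (c * hA.eigenvalues i) ≤ 2 * (c * r) by gcongr; exact hr i).trans_lt hc
  rw [hset, iidGaussian_eq_pi, gaussianMeasure_one]
  calc _ ≤ Real.exp (-c * (n * t)) *
        mgf (centeredQuadForm A) (Measure.pi fun _ ↦ gaussianReal 0 1) c ^ Fintype.card (Fin n) :=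
        measureReal_pi_le_sum_le hc0 hint _
    _ ≤ Real.exp (-c * (n * t)) *
        Real.exp (c ^ 2 * (∑ i, hA.eigenvalues i ^ 2) / (1 - 2 * (c * r))) ^ n := by
        rw [Fintype.card_fin]
        gcongr
        · exact ProbabilityTheory.mgf_nonneg
        · exact mgf_centeredQuadForm_le hA hr hr0 hc0 hc
    _ = _ := by
        rw [← Real.exp_nat_mul, ← Real.exp_add]
        ring_nf

theorem iidGaussian_one_real_trace_ge_le_bernstein (hn : n ≠ 0) {A : Matrix (Fin p) (Fin p) ℝ}
    (hA : A.IsHermitian) {r v t : ℝ} (hr : ∀ i, hA.eigenvalues i ≤ r)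
    (hv : ∑ i, hA.eigenvalues i ^ 2 ≤ v) (hr0 : 0 ≤ r) (hv0 : 0 < v) (ht : 0 ≤ t) :
    (iidGaussian n p 1).real {X | t ≤ (A * (sampleCov X - 1)).trace} ≤
      Real.exp (-(n * t ^ 2 / (4 * (v + r * t)))) := by
  have hpos : 0 < v + r * t := by positivity
  set c : ℝ := t / (2 * (v + r * t))
  have hc : 1 - 2 * (c * r) = v / (v + r * t) := by
    simp only [c]
    field
  have hc' : 0 < 1 - 2 * (c * r) := hc ▸ by positivity
  refine (iidGaussian_one_real_trace_ge_le_chernoff (c := c) hn hA hr hr0 (by positivity)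
    (by linarith) t).trans ?_
  gcongr
  calc n * (c ^ 2 * (∑ i, hA.eigenvalues i ^ 2) / (1 - 2 * (c * r)) - c * t)
      ≤ n * (c ^ 2 * v / (1 - 2 * (c * r)) - c * t) := by gcongr
    _ = -(n * t ^ 2 / (4 * (v + r * t))) := by
        rw [hc]
        simp only [c]
        field

end SampleCovariance

section LagMatrix

variable {p j S : ℕ} {W : Finset ℕ}

theorem isHermitian_sum_lagMatrix (p : ℕ) (W : Finset ℕ) :
    (∑ j ∈ W, lagMatrix p j).IsHermitian := by
  refine Matrix.IsHermitian.ext fun k l ↦ ?_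
  simp only [star_trivial, Matrix.sum_apply, lagMatrix, of_apply]
  refine Finset.sum_congr rfl fun j _ ↦ ?_
  rw [← Int.natAbs_neg, neg_sub]

theorem card_filter_natAbs_sub_eq_le (p j : ℕ) (k : ℤ) :
    (Finset.univ.filter fun l : Fin p ↦ (k - (l : ℤ)).natAbs = j).card ≤ 2 := by
  have hmaps : Set.MapsTo (fun l : Fin p ↦ (l : ℤ))
      (Finset.univ.filter fun l : Fin p ↦ (k - (l : ℤ)).natAbs = j)
      ({k - j, k + j} : Finset ℤ) := by
    intro l hl
    simp only [Finset.coe_filter, Finset.mem_univ, true_and, Set.mem_ofPred_eq] at hl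
    simp only [Finset.coe_insert, Finset.coe_singleton, Set.mem_insert_iff, Set.mem_singleton_iff]
    lia
  have hinj : Function.Injective fun l : Fin p ↦ (l : ℤ) :=
    Nat.cast_injective.comp Fin.val_injective
  exact (Finset.card_le_card_of_injOn _ hmaps hinj.injOn).trans Finset.card_le_two

theorem card_filter_prod_natAbs_sub_eq_le (p j : ℕ) :
    (Finset.univ.filter fun q : Fin p × Fin p ↦ ((q.1 : ℤ) - (q.2 : ℤ)).natAbs = j).card ≤
      (p - j) * 2 := by
  -- A pair at distance `j` is determined by its smaller entry and the order of its entries.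
  refine (Finset.card_le_card_of_injOn
    (t := Finset.range (p - j) ×ˢ (Finset.univ : Finset Bool))
    (fun q ↦ (min (q.1 : ℕ) q.2, decide (q.1 < q.2))) ?mapsTo ?injOn).trans (by simp)
  case mapsTo =>
    rintro ⟨k, l⟩ hq
    simp only [Finset.coe_filter, Finset.mem_univ, true_and, Set.mem_ofPred_eq] at hq
    simp only [Finset.coe_product, Finset.coe_range, Finset.coe_univ, Set.mem_prod, Set.mem_Iio,
      Set.mem_univ, and_true]
    omega
  case injOn =>
    rintro ⟨k, l⟩ hq ⟨k', l'⟩ hq' h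
    simp only [Finset.coe_filter, Finset.mem_univ, true_and, Set.mem_ofPred_eq] at hq hq'
    simp only [Prod.mk.injEq, decide_eq_decide, Fin.lt_def] at h
    simp only [Prod.mk.injEq, Fin.ext_iff]
    omega

theorem sum_abs_lagMatrix_le (hj : j < p) (k : Fin p) :
    ∑ l, |lagMatrix p j k l| ≤ 1 / ((p : ℝ) - j) := by
  have hpj : (0 : ℝ) < p - j := sub_pos.2 (Nat.cast_lt.2 hj)
  calc ∑ l, |lagMatrix p j k l|
      = (Finset.univ.filter fun l : Fin p ↦ ((k : ℤ) - (l : ℤ)).natAbs = j).card *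
          (1 / (2 * ((p : ℝ) - j))) := by
        rw [← nsmul_eq_mul, ← Finset.sum_const, Finset.sum_filter]
        refine Finset.sum_congr rfl fun l _ ↦ ?_
        rw [lagMatrix, of_apply, apply_ite abs, abs_zero, abs_of_nonneg (by positivity)]
    _ ≤ 2 * (1 / (2 * ((p : ℝ) - j))) := by
        gcongr
        exact_mod_cast card_filter_natAbs_sub_eq_le p j k
    _ = 1 / ((p : ℝ) - j) := by field

theorem sum_sum_lagMatrix_sq_le (hj : j < p) :
    ∑ k, ∑ l, lagMatrix p j k l ^ 2 ≤ 1 / (2 * ((p : ℝ) - j)) := by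
  have hpj : (0 : ℝ) < p - j := sub_pos.2 (Nat.cast_lt.2 hj)
  calc ∑ k, ∑ l, lagMatrix p j k l ^ 2
      = (Finset.univ.filter fun q : Fin p × Fin p ↦ ((q.1 : ℤ) - (q.2 : ℤ)).natAbs = j).card *
          (1 / (2 * ((p : ℝ) - j))) ^ 2 := by
        rw [← nsmul_eq_mul, ← Finset.sum_const, Finset.sum_filter, Fintype.sum_prod_type]
        simp only [lagMatrix, of_apply, ite_pow, ne_eq, OfNat.ofNat_ne_zero, not_false_eq_true,
          zero_pow]
    _ ≤ ((p : ℝ) - j) * 2 * (1 / (2 * ((p : ℝ) - j))) ^ 2 := by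
        rw [← Nat.cast_sub hj.le]
        gcongr
        exact_mod_cast card_filter_prod_natAbs_sub_eq_le p j
    _ = 1 / (2 * ((p : ℝ) - j)) := by field

theorem sum_abs_sum_lagMatrix_le (hW : ∀ j ∈ W, j ≤ S) (hS : S < p) (k : Fin p) :
    ∑ l, |(∑ j ∈ W, lagMatrix p j) k l| ≤ W.card / ((p : ℝ) - S) := by
  have hpS : (0 : ℝ) < p - S := sub_pos.2 (Nat.cast_lt.2 hS)
  calc ∑ l, |(∑ j ∈ W, lagMatrix p j) k l|
      ≤ ∑ l, ∑ j ∈ W, |lagMatrix p j k l| := by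
        gcongr with l
        rw [Matrix.sum_apply]
        exact Finset.abs_sum_le_sum_abs _ _
    _ = ∑ j ∈ W, ∑ l, |lagMatrix p j k l| := Finset.sum_comm
    _ ≤ ∑ j ∈ W, 1 / ((p : ℝ) - S) := by
        refine Finset.sum_le_sum fun j hj ↦
          (sum_abs_lagMatrix_le ((hW j hj).trans_lt hS) k).trans ?_
        gcongr
        exact hW j hj
    _ = W.card / ((p : ℝ) - S) := by rw [Finset.sum_const, nsmul_eq_mul, mul_one_div]

theorem sum_lagMatrix_apply_sq (p : ℕ) (W : Finset ℕ) (k l : Fin p) :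
    (∑ j ∈ W, lagMatrix p j) k l ^ 2 = ∑ j ∈ W, lagMatrix p j k l ^ 2 := by
  simp only [Matrix.sum_apply, lagMatrix, of_apply, ite_pow, ne_eq, OfNat.ofNat_ne_zero,
    not_false_eq_true, zero_pow, Finset.sum_ite_eq]

theorem sum_sum_sum_lagMatrix_sq_le (hW : ∀ j ∈ W, j ≤ S) (hS : S < p) :
    ∑ k, ∑ l, (∑ j ∈ W, lagMatrix p j) k l ^ 2 ≤ W.card / ((p : ℝ) - S) / 2 := by
  have hpS : (0 : ℝ) < p - S := sub_pos.2 (Nat.cast_lt.2 hS)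
  calc ∑ k, ∑ l, (∑ j ∈ W, lagMatrix p j) k l ^ 2
      = ∑ j ∈ W, ∑ k, ∑ l, lagMatrix p j k l ^ 2 := by
        simp only [sum_lagMatrix_apply_sq]
        rw [Finset.sum_comm (s := W)]
        exact Finset.sum_congr rfl fun k _ ↦ Finset.sum_comm
    _ ≤ ∑ j ∈ W, 1 / (2 * ((p : ℝ) - S)) := by
        refine Finset.sum_le_sum fun j hj ↦
          (sum_sum_lagMatrix_sq_le ((hW j hj).trans_lt hS)).trans ?_
        gcongr
        exact hW j hj
    _ = W.card / ((p : ℝ) - S) / 2 := by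
        rw [Finset.sum_const, nsmul_eq_mul, mul_one_div, div_div, mul_comm 2]

theorem iidGaussian_one_real_trace_sum_lagMatrix_ge_le {n : ℕ} (hn : n ≠ 0)
    (hW : ∀ j ∈ W, j ≤ S) (hS : S < p) (hw : 0 < W.card) {r t : ℝ}
    (hr : r = W.card / ((p : ℝ) - S)) (ht : 0 ≤ t) :
    (iidGaussian n p 1).real {X | t ≤ ((∑ j ∈ W, lagMatrix p j) * (sampleCov X - 1)).trace} ≤
      Real.exp (-(n * t ^ 2 / (4 * (r / 2 + r * t)))) := by
  have hA := isHermitian_sum_lagMatrix p W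
  have hr0 : 0 < r := hr ▸ div_pos (Nat.cast_pos.2 hw) (sub_pos.2 (Nat.cast_lt.2 hS))
  have heig (i) : hA.eigenvalues i ≤ r := (le_abs_self _).trans
    (hr ▸ abs_eigenvalues_le_of_sum_norm_le hA (sum_abs_sum_lagMatrix_le hW hS) i)
  have hsq : ∑ i, hA.eigenvalues i ^ 2 ≤ r / 2 := by
    simpa only [hr, sum_sq_eigenvalues_eq hA, Real.norm_eq_abs, sq_abs] using
      sum_sum_sum_lagMatrix_sq_le hW hS
  exact iidGaussian_one_real_trace_ge_le_bernstein hn hA heig hsq hr0.le (by positivity) ht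

end LagMatrix

theorem mul_half_add_mul_le_sq {K m t u : ℝ} (hK : K ∈ Set.Ioo (0 : ℝ) 1) (hm : 0 ≤ m)
    (hu : 0 ≤ u) (h_sqrt : √(u / (2 * (1 - K))) * √m ≤ t) (h_linear : u / K * m ≤ t) :
    u * (m / 2 + m * t) ≤ t ^ 2 := by
  obtain ⟨hK0, hK1⟩ := hK
  have hK1' : 0 < 1 - K := sub_pos.2 hK1
  have hquad : u * m / 2 ≤ (1 - K) * t ^ 2 := by
    have h : u / (2 * (1 - K)) * m ≤ t ^ 2 := by
      rw [← Real.sqrt_mul (by positivity)] at h_sqrt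
      exact (Real.sqrt_le_iff.1 h_sqrt).2
    calc u * m / 2 = (1 - K) * (u / (2 * (1 - K)) * m) := by field
      _ ≤ (1 - K) * t ^ 2 := by gcongr
  have hlin : u * m * t ≤ K * t ^ 2 := by
    have ht : 0 ≤ t := le_trans (by positivity) h_linear
    calc u * m * t = K * (u / K * m) * t := by field
      _ ≤ K * t * t := by gcongr
      _ = K * t ^ 2 := by ring
  linarith

theorem deviation_null_lagMatrix_sum_general {p n S : ℕ} (hn : 0 < n) (hS : S < p)
    (W : Finset ℕ) (hW : ∀ j ∈ W, j ≤ S) (hw : 1 ≤ W.card)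
    (K u : ℝ) (hK : K ∈ Set.Ioo (0 : ℝ) 1) (hu : 0 < u) :
    (iidGaussian n p 1) {X | Matrix.trace ((∑ j ∈ W, lagMatrix p j) * (sampleCov X - 1)) ≥
        max (Real.sqrt (u / (2 * (1 - K))) * Real.sqrt ((W.card : ℝ) / (n * ((p : ℝ) - S))))
          ((u / K) * (W.card : ℝ) / (n * ((p : ℝ) - S)))}
      ≤ ENNReal.ofReal (Real.exp (-u / 4)) := by
  have hpS : (0 : ℝ) < p - S := sub_pos.2 (Nat.cast_lt.2 hS)
  have hw' : (0 : ℝ) < W.card := Nat.cast_pos.2 hw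
  rw [mul_div_assoc]
  set m : ℝ := W.card / (n * ((p : ℝ) - S)) with hm
  set t : ℝ := max (√(u / (2 * (1 - K))) * √m) (u / K * m)
  have hm0 : 0 < m := by positivity
  have ht : 0 ≤ t := le_max_of_le_left (by positivity)
  have hnm : n * m = W.card / (p - S) := by rw [hm]; field
  have hut : u * (m / 2 + m * t) ≤ t ^ 2 :=
    mul_half_add_mul_le_sq hK hm0.le hu.le (le_max_left _ _) (le_max_right _ _)
  have hexponent : u / 4 ≤ n * t ^ 2 / (4 * (n * m / 2 + n * m * t)) := by
    rw [div_le_div_iff₀ (by positivity) (by positivity)]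
    linear_combination 4 * (n : ℝ) * hut
  have hbern := iidGaussian_one_real_trace_sum_lagMatrix_ge_le hn.ne' hW hS hw hnm ht
  rw [← ofReal_measureReal (measure_ne_top _ _), neg_div]
  exact ENNReal.ofReal_le_ofReal (hbern.trans (Real.exp_le_exp.2 (neg_le_neg hexponent)))

/-- Deviation bound for `Tr(A_W(Σ_n − I_p))` under the null. -/
theorem deviation_null_lagMatrix_sum {p n S : ℕ} (hn : 0 < n) (hS1 : 1 ≤ S)
    (hS : (S : ℝ) < (p:ℝ)/2)
    (W : Finset ℕ) (hW : W ⊆ Finset.Icc 1 S) (hw : 1 ≤ W.card)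
    (K u : ℝ) (hK : K ∈ Set.Ioo (0:ℝ) 1) (hu : 0 < u) :
    (iidGaussian n p 1) {X | Matrix.trace ((∑ j ∈ W, lagMatrix p j) * (sampleCov X - 1)) ≥
        max (Real.sqrt (u / (2 * (1 - K))) * Real.sqrt ((W.card : ℝ) / (n * ((p:ℝ) - S))))
          ((u / K) * (W.card : ℝ) / (n * ((p:ℝ) - S)))}
      ≤ ENNReal.ofReal (Real.exp (-u/4)) := by
  have hSp : S < p := by exact_mod_cast hS.trans_le (half_le_self p.cast_nonneg)
  exact deviation_null_lagMatrix_sum_general hn hSp W (fun j hj ↦ (Finset.mem_Icc.1 (hW hj)).2)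
    hw K u hK hu
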